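/- Let 𝒟 ⊆ (ℤ/3ℤ)^12 be the ternary code spanned by the six vectors (1,1,0,0,0,0,1,0,0,0,0,0), (1,2,0,0,0,0,0,1,0,0,0,0), (0,0,1,1,0,0,0,0,1,0,0,0), (0,0,1,2,0,0,0,0,0,1,0,0), (0,0,0,0,1,1,0,0,0,0,1,0), (0,0,0,0,1,2,0,0,0,0,0,1). Let h' be the linear automorphism of (ℤ/3ℤ)^12 defined by (h'x)_i = x_{i+6} for 1 ≤ i ≤ 6 and (h'x)_i = −x_{i−6} for 7 ≤ i ≤ 12. Then h'(𝒟) = 𝒟. -/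

import Mathlib

/-- The ternary glue code `𝒟 ⊆ 𝔽₃¹²` spanned by the six listed generators is invariant
under the linear automorphism `h'` which sends `(h'x)ᵢ = x_{i+6}` for the first six
coordinates and `(h'x)ᵢ = -x_{i-6}` for the last six. -/
theorem stmt6
    (h' : (Fin 12 → ZMod 3) →ₗ[ZMod 3] (Fin 12 → ZMod 3))
    (hh' : ∀ (x : Fin 12 → ZMod 3) (i : Fin 12),
      h' x i = if (i : ℕ) < 6 then x (i + 6) else - x (i - 6)) :
    Submodule.map h' (Submodule.span (ZMod 3)
      ({![1,1,0,0,0,0,1,0,0,0,0,0],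
        ![1,2,0,0,0,0,0,1,0,0,0,0],
        ![0,0,1,1,0,0,0,0,1,0,0,0],
        ![0,0,1,2,0,0,0,0,0,1,0,0],
        ![0,0,0,0,1,1,0,0,0,0,1,0],
        ![0,0,0,0,1,2,0,0,0,0,0,1]} : Set (Fin 12 → ZMod 3))) =
    Submodule.span (ZMod 3)
      ({![1,1,0,0,0,0,1,0,0,0,0,0],
        ![1,2,0,0,0,0,0,1,0,0,0,0],
        ![0,0,1,1,0,0,0,0,1,0,0,0],
        ![0,0,1,2,0,0,0,0,0,1,0,0],
        ![0,0,0,0,1,1,0,0,0,0,1,0],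
        ![0,0,0,0,1,2,0,0,0,0,0,1]} : Set (Fin 12 → ZMod 3)) := by
  have hf : ∀ x, h' x = fun i : Fin 12 => if (i : ℕ) < 6 then x (i + 6) else - x (i - 6) :=
    fun x => funext (hh' x)
  have h2 : ∀ x, h' (h' x) = -x := by
    intro x
    funext i
    rw [hf, hf]
    fin_cases i <;> simp <;> rfl
  have key : ∀ S : Set (Fin 12 → ZMod 3),
      (∀ v ∈ S, h' v ∈ Submodule.span (ZMod 3) S) →
      Submodule.map h' (Submodule.span (ZMod 3) S) = Submodule.span (ZMod 3) S := by
    intro S hS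
    have hle : Submodule.map h' (Submodule.span (ZMod 3) S) ≤ Submodule.span (ZMod 3) S := by
      rw [Submodule.map_span_le]
      exact hS
    refine le_antisymm hle ?_
    intro x hx
    refine ⟨-(h' x), Submodule.neg_mem _ (hle ⟨x, hx, rfl⟩), ?_⟩
    rw [map_neg, h2, neg_neg]
  apply key
  have comb : ∀ (S : Set (Fin 12 → ZMod 3)) (a b v : Fin 12 → ZMod 3), a ∈ S → b ∈ S →
      ∀ c : ZMod 3, h' v = -a + c • b → h' v ∈ Submodule.span (ZMod 3) S := by
    intro S a b v ha hb c h
    rw [h]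
    exact Submodule.add_mem _ (Submodule.neg_mem _ (Submodule.subset_span ha))
      (Submodule.smul_mem _ _ (Submodule.subset_span hb))
  intro v hv
  simp only [Set.mem_insert_iff, Set.mem_singleton_iff] at hv
  rcases hv with rfl | rfl | rfl | rfl | rfl | rfl
  · exact comb _ ![1,1,0,0,0,0,1,0,0,0,0,0]
      ![1,2,0,0,0,0,0,1,0,0,0,0] _ (by simp) (by simp) (-1) (by rw [hf]; decide)
  · exact comb _ ![1,1,0,0,0,0,1,0,0,0,0,0]
      ![1,2,0,0,0,0,0,1,0,0,0,0] _ (by simp) (by simp) (1) (by rw [hf]; decide)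
  · exact comb _ ![0,0,1,1,0,0,0,0,1,0,0,0]
      ![0,0,1,2,0,0,0,0,0,1,0,0] _ (by simp) (by simp) (-1) (by rw [hf]; decide)
  · exact comb _ ![0,0,1,1,0,0,0,0,1,0,0,0]
      ![0,0,1,2,0,0,0,0,0,1,0,0] _ (by simp) (by simp) (1) (by rw [hf]; decide)
  · exact comb _ ![0,0,0,0,1,1,0,0,0,0,1,0]
      ![0,0,0,0,1,2,0,0,0,0,0,1] _ (by simp) (by simp) (-1) (by rw [hf]; decide)
  · exact comb _ ![0,0,0,0,1,1,0,0,0,0,1,0]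
      ![0,0,0,0,1,2,0,0,0,0,0,1] _ (by simp) (by simp) (1) (by rw [hf]; decide)
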